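/- Let σ, χ, λ be cardinals with cf(χ) < σ = cf(σ) < χ < λ. Then cov(λ, χ⁺, χ⁺, σ) = cov(λ, χ, χ⁺, σ) = cov(λ, χ, χ, σ) = cov(λ, χ⁺, χ, σ). -/

import Mathlib

/-!
`cov` decreases when larger covering sets are allowed and increases when larger sets have to be
covered, so among the four numbers `cov (λ, χ, χ⁺, σ)` is the largest and `cov (λ, χ⁺, χ, σ)` the
smallest. It remains to turn a family `X` for `cov (λ, χ⁺, χ, σ)` into one for
`cov (λ, χ, χ⁺, σ)` without increasing its cardinality (`exists_refined_family`).

Every set of size at most `χ` is a union of at most `cf χ < σ` sets of size less than `χ`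
(`exists_decomposition`). Splitting the members of `X` in this way gives a family `X'` of sets of
size less than `χ`. A set `b` of size at most `χ` splits into fewer than `σ` pieces of size less
than `χ`, each covered by fewer than `σ` members of `X`, each of which is a union of fewer than `σ`
members of `X'`; since `σ` is regular, fewer than `σ` members of `X'` cover `b`. Finally
`|X'| ≤ |X| · cf χ`, and `|X| ≥ λ > cf χ` because `X` is a cover of `λ` by sets of size at most
`χ < λ`.
-/

open Cardinal Set

universe u

/-- `X ⊆ 𝒫_{ρ₂}(ρ₁)` is a family witnessing the covering number `cov (ρ₁, ρ₂, ρ₃, ρ₄)`: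
every `b ∈ 𝒫_{ρ₃}(ρ₁)` is covered by the union of fewer than `ρ₄` members of `X`. -/
def IsCovFamily (ρ₁ ρ₂ ρ₃ ρ₄ : Cardinal.{u}) (X : Set (Set ρ₁.out)) : Prop :=
  (∀ x ∈ X, #x < ρ₂) ∧
    ∀ b : Set ρ₁.out, #b < ρ₃ →
      ∃ Q : Set (Set ρ₁.out), Q ⊆ X ∧ #Q < ρ₄ ∧ b ⊆ ⋃₀ Q

open scoped Classical in
/-- The covering number `cov (ρ₁, ρ₂, ρ₃, ρ₄)`: the least cardinality of a set
`X ⊆ 𝒫_{ρ₂}(ρ₁)` such that every `b ∈ 𝒫_{ρ₃}(ρ₁)` is included in the union of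
fewer than `ρ₄` members of `X` (with value `2 ^ ρ₁` if no such family exists). -/
noncomputable def cov (ρ₁ ρ₂ ρ₃ ρ₄ : Cardinal.{u}) : Cardinal.{u} :=
  if ∃ X, IsCovFamily ρ₁ ρ₂ ρ₃ ρ₄ X then
    sInf {κ | ∃ X, IsCovFamily ρ₁ ρ₂ ρ₃ ρ₄ X ∧ #X = κ}
  else 2 ^ ρ₁

/-- `χ` is a `λ`-revision cardinal: `cov (λ, χ, χ, σ) ≤ λ` for some cardinal `σ < χ`. -/
def IsRevision (χ lam : Cardinal.{u}) : Prop :=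
  ∃ σ < χ, cov lam χ χ σ ≤ lam

/-- `c` is a limit cardinal: infinite and not the successor of any cardinal. -/
def IsLimitCard (c : Cardinal.{u}) : Prop :=
  ℵ₀ ≤ c ∧ ∀ μ : Cardinal.{u}, c ≠ Order.succ μ

/-- `Z ⊆ 𝒫_τ(λ)` is a family witnessing `equal (λ, τ, ρ, σ)`: every `b ∈ [λ]^ρ` is
the union of fewer than `σ` members of `Z`. -/
def IsEqualFamily (lam tau rho sigma : Cardinal.{u}) (Z : Set (Set lam.out)) : Prop :=
  (∀ z ∈ Z, #z < tau) ∧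
    ∀ b : Set lam.out, #b = rho →
      ∃ e : Set (Set lam.out), e ⊆ Z ∧ #e < sigma ∧ b = ⋃₀ e

open scoped Classical in
/-- `equal (λ, τ, ρ, σ)`: the least cardinality of a set `Z ⊆ 𝒫_τ(λ)` such that every
`b ∈ [λ]^ρ` is the union of fewer than `σ` members of `Z`; `2 ^ λ` if no such `Z` exists. -/
noncomputable def equalCov (lam tau rho sigma : Cardinal.{u}) : Cardinal.{u} :=
  if ∃ Z, IsEqualFamily lam tau rho sigma Z then
    sInf {κ | ∃ Z, IsEqualFamily lam tau rho sigma Z ∧ #Z = κ}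
  else 2 ^ lam

/-- `Z ⊆ 𝒫_τ(λ)` is a family witnessing `equal (λ, τ, <ρ, σ)`: every `b ∈ 𝒫_ρ(λ)` is
the union of fewer than `σ` members of `Z`. -/
def IsEqualLtFamily (lam tau rho sigma : Cardinal.{u}) (Z : Set (Set lam.out)) : Prop :=
  (∀ z ∈ Z, #z < tau) ∧
    ∀ b : Set lam.out, #b < rho →
      ∃ e : Set (Set lam.out), e ⊆ Z ∧ #e < sigma ∧ b = ⋃₀ e

open scoped Classical in
/-- `equal (λ, τ, <ρ, σ)`: the least cardinality of a set `Z ⊆ 𝒫_τ(λ)` such that every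
`b ∈ 𝒫_ρ(λ)` is the union of fewer than `σ` members of `Z`; `2 ^ λ` if no such `Z` exists. -/
noncomputable def equalLtCov (lam tau rho sigma : Cardinal.{u}) : Cardinal.{u} :=
  if ∃ Z, IsEqualLtFamily lam tau rho sigma Z then
    sInf {κ | ∃ Z, IsEqualLtFamily lam tau rho sigma Z ∧ #Z = κ}
  else 2 ^ lam

theorem cov_le_mk {ρ₁ ρ₂ ρ₃ ρ₄ : Cardinal.{u}} {X : Set (Set ρ₁.out)}
    (h : IsCovFamily ρ₁ ρ₂ ρ₃ ρ₄ X) : cov ρ₁ ρ₂ ρ₃ ρ₄ ≤ #X := by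
  rw [cov, if_pos ⟨X, h⟩]
  exact csInf_le' ⟨X, h, rfl⟩

theorem exists_mk_eq_cov {ρ₁ ρ₂ ρ₃ ρ₄ : Cardinal.{u}} (h : ∃ X, IsCovFamily ρ₁ ρ₂ ρ₃ ρ₄ X) :
    ∃ X, IsCovFamily ρ₁ ρ₂ ρ₃ ρ₄ X ∧ #X = cov ρ₁ ρ₂ ρ₃ ρ₄ := by
  rw [cov, if_pos h]
  obtain ⟨X, hX⟩ := h
  exact csInf_mem (s := {κ | ∃ X, IsCovFamily ρ₁ ρ₂ ρ₃ ρ₄ X ∧ #X = κ}) ⟨_, X, hX, rfl⟩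

theorem IsCovFamily.mono {ρ₁ ρ₂ ρ₂' ρ₃ ρ₃' ρ₄ : Cardinal.{u}} {X : Set (Set ρ₁.out)}
    (h : IsCovFamily ρ₁ ρ₂ ρ₃ ρ₄ X) (h2 : ρ₂ ≤ ρ₂') (h3 : ρ₃' ≤ ρ₃) :
    IsCovFamily ρ₁ ρ₂' ρ₃' ρ₄ X :=
  ⟨fun x hx => (h.1 x hx).trans_le h2, fun b hb => h.2 b (hb.trans_le h3)⟩

/-- Only the larger number needs a witnessing family; without one it would take its default
value. -/
theorem cov_mono {ρ₁ ρ₂ ρ₂' ρ₃ ρ₃' ρ₄ : Cardinal.{u}} (h : ∃ X, IsCovFamily ρ₁ ρ₂ ρ₃ ρ₄ X)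
    (h2 : ρ₂ ≤ ρ₂') (h3 : ρ₃' ≤ ρ₃) : cov ρ₁ ρ₂' ρ₃' ρ₄ ≤ cov ρ₁ ρ₂ ρ₃ ρ₄ := by
  obtain ⟨X, hX, hc⟩ := exists_mk_eq_cov h
  exact hc ▸ cov_le_mk (hX.mono h2 h3)

/-- The pieces are the preimages of the initial segments bounded by the points of a cofinal subset
of `χ`, under an injection of `x` into `χ`. -/
theorem exists_decomposition {α : Type u} {χ : Cardinal.{u}} (hχ : ℵ₀ ≤ χ) (x : Set α)
    (hx : #x ≤ χ) :
    ∃ F : Set (Set α), #F ≤ χ.ord.cof ∧ (∀ y ∈ F, #y < χ) ∧ x = ⋃₀ F := by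
  obtain ⟨S, hS, hSc⟩ := Order.exists_cof_eq χ.ord.ToType
  rw [Ordinal.cof_toType] at hSc
  have hx' : #x ≤ #χ.ord.ToType := by simpa using hx
  obtain ⟨e⟩ := hx'
  let f : S → Set α := fun s => Subtype.val '' {a : x | e a ≤ s.1}
  refine ⟨range f, hSc ▸ mk_range_le, ?_, ?_⟩
  · rintro _ ⟨s, rfl⟩
    have h : #{a : x | e a ≤ s.1} ≤ #(Iic s.1) :=
      mk_le_of_injective (f := fun a => ⟨e a.1, a.2⟩) fun a b hab =>
        Subtype.ext (e.injective (congrArg Subtype.val hab))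
    refine (mk_image_le.trans h).trans_lt ?_
    rw [← Iio_insert]
    exact mk_insert_le.trans_lt
      (add_lt_of_lt hχ (by simpa using mk_Iio_lt s.1 (by simp)) (one_lt_aleph0.trans_le hχ))
  · ext a
    simp only [f, sUnion_range, mem_iUnion, mem_image, mem_ofPred_eq, Subtype.exists,
      exists_and_right, exists_eq_right]
    constructor
    · intro ha
      obtain ⟨s, hs, hle⟩ := hS (e ⟨a, ha⟩)
      exact ⟨s, hs, ha, hle⟩
    · rintro ⟨_, _, ha, _⟩
      exact ha

/-- A family of sets of size at most `χ < λ` that covers all singletons of `λ` has at least `λ`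
members. -/
theorem le_mk_of_isCovFamily {σ χ lam : Cardinal.{u}} (hχ : ℵ₀ ≤ χ) (h4 : χ < lam)
    {X : Set (Set lam.out)} (hX : IsCovFamily lam (Order.succ χ) χ σ X) : lam ≤ #X := by
  have huniv : ⋃₀ X = Set.univ := by
    refine eq_univ_of_forall fun a => ?_
    obtain ⟨Q, hQ, -, haQ⟩ := hX.2 {a} (by simpa using one_lt_aleph0.trans_le hχ)
    exact sUnion_mono hQ (haQ rfl)
  by_contra! hlt
  have h : #(⋃₀ X) ≤ #X * χ :=
    (mk_sUnion_le X).trans (mul_le_mul' le_rfl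
      (ciSup_le' fun s => Order.lt_succ_iff.1 (hX.1 s.1 s.2)))
  rw [huniv, mk_univ, mk_out] at h
  exact absurd (h.trans_lt (mul_lt_of_lt (hχ.trans h4.le) hlt h4)) (lt_irrefl _)

theorem exists_refined_family {σ χ lam : Cardinal.{u}} (hσ : σ.IsRegular) (h1 : χ.ord.cof < σ)
    (h3 : σ < χ) (h4 : χ < lam) {X : Set (Set lam.out)}
    (hX : IsCovFamily lam (Order.succ χ) χ σ X) :
    ∃ X', IsCovFamily lam χ (Order.succ χ) σ X' ∧ #X' ≤ #X := by
  have hχ : ℵ₀ ≤ χ := hσ.aleph0_le.trans h3.le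
  choose! F hFc hFlt hFeq using fun x : Set lam.out => exists_decomposition (χ := χ) hχ x
  have hle : ∀ x ∈ X, #x ≤ χ := fun x hx => Order.lt_succ_iff.1 (hX.1 x hx)
  refine ⟨⋃ x ∈ X, F x, ⟨?_, ?_⟩, ?_⟩
  · intro y hy
    simp only [mem_iUnion] at hy
    obtain ⟨x, hx, hy⟩ := hy
    exact hFlt x (hle x hx) y hy
  · intro b hb
    have hb := Order.lt_succ_iff.1 hb
    choose! Q hQX hQc hQ using hX.2
    refine ⟨⋃ y ∈ F b, ⋃ x ∈ Q y, F x, ?_, ?_, ?_⟩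
    · intro z hz
      simp only [mem_iUnion] at hz ⊢
      obtain ⟨y, hy, x, hx, hz⟩ := hz
      exact ⟨x, hQX y (hFlt b hb y hy) hx, hz⟩
    · refine (card_biUnion_lt_iff_forall_of_isRegular hσ ((hFc b hb).trans_lt h1)).2
        fun y hy => ?_
      have hyχ := hFlt b hb y hy
      exact (card_biUnion_lt_iff_forall_of_isRegular hσ (hQc y hyχ)).2
        fun x hx => (hFc x (hle x (hQX y hyχ hx))).trans_lt h1
    · intro a ha
      rw [hFeq b hb] at ha
      obtain ⟨y, hy, hay⟩ := ha
      obtain ⟨x, hx, hax⟩ := hQ y (hFlt b hb y hy) hay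
      rw [hFeq x (hle x (hQX y (hFlt b hb y hy) hx))] at hax
      obtain ⟨z, hz, haz⟩ := hax
      refine ⟨z, ?_, haz⟩
      simp only [mem_iUnion]
      exact ⟨y, hy, x, hx, hz⟩
  · have hlam : lam ≤ #X := le_mk_of_isCovFamily hχ h4 hX
    calc #(⋃ x ∈ X, F x) ≤ #X * ⨆ x : X, #(F x.1) := mk_biUnion_le _ _
      _ ≤ #X * #X := mul_le_mul' le_rfl (ciSup_le' fun x =>
          (hFc x.1 (hle x.1 x.2)).trans ((h1.trans (h3.trans h4)).le.trans hlam))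
      _ = #X := mul_eq_self (hχ.trans (h4.le.trans hlam))

/-- Let `σ, χ, λ` be cardinals with `cf χ < σ = cf σ < χ < λ`. Then
`cov (λ, χ⁺, χ⁺, σ) = cov (λ, χ, χ⁺, σ) = cov (λ, χ, χ, σ) = cov (λ, χ⁺, χ, σ)`. -/
theorem stmt11 (σ χ lam : Cardinal.{u}) (h1 : χ.ord.cof < σ) (h2 : σ.ord.cof = σ)
    (h3 : σ < χ) (h4 : χ < lam) :
    cov lam (Order.succ χ) (Order.succ χ) σ = cov lam χ (Order.succ χ) σ ∧
      cov lam χ (Order.succ χ) σ = cov lam χ χ σ ∧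
      cov lam χ χ σ = cov lam (Order.succ χ) χ σ := by
  have hσ : σ.IsRegular := by
    refine ⟨?_, h2.ge⟩
    rw [← h2, Ordinal.aleph0_le_cof_iff, h2]
    by_contra! hσ1
    -- `σ ≤ 1` would force `cf χ = 0`, hence `χ = 0`.
    have h0 : χ.ord.cof = 0 := Cardinal.lt_one_iff.1 (h1.trans_le hσ1)
    rw [Ordinal.cof_eq_zero, Cardinal.ord_eq_zero] at h0
    exact not_lt_zero (h0 ▸ h3)
  have hs : χ ≤ Order.succ χ := Order.le_succ χ
  have hD : ∃ X, IsCovFamily lam (Order.succ χ) χ σ X :=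
    ⟨{x | #x < Order.succ χ}, fun _ hx => hx, fun b hb =>
      ⟨{b}, by simpa using hb.le, by simpa using one_lt_aleph0.trans_le hσ.aleph0_le, by simp⟩⟩
  obtain ⟨X, hX, hXc⟩ := exists_mk_eq_cov hD
  obtain ⟨X', hX', hle⟩ := exists_refined_family hσ h1 h3 h4 hX
  have hBD : cov lam χ (Order.succ χ) σ ≤ cov lam (Order.succ χ) χ σ :=
    hXc ▸ (cov_le_mk hX').trans hle
  have hBA : cov lam (Order.succ χ) (Order.succ χ) σ ≤ cov lam χ (Order.succ χ) σ :=
    cov_mono ⟨X', hX'⟩ hs le_rfl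
  have hAD : cov lam (Order.succ χ) χ σ ≤ cov lam (Order.succ χ) (Order.succ χ) σ :=
    cov_mono ⟨X', hX'.mono hs le_rfl⟩ le_rfl hs
  have hBC : cov lam χ χ σ ≤ cov lam χ (Order.succ χ) σ := cov_mono ⟨X', hX'⟩ le_rfl hs
  have hCD : cov lam (Order.succ χ) χ σ ≤ cov lam χ χ σ :=
    cov_mono ⟨X', hX'.mono le_rfl hs⟩ hs le_rfl
  exact ⟨hBA.antisymm (hBD.trans hAD), (hBD.trans hCD).antisymm hBC,
    (hBC.trans hBD).antisymm hCD⟩
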